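/- Let h : [0,1] → [0,1] be a unimodal, locally eventually onto map with critical point c, and let ε > 0. Then there is a positive integer M with the property that if x, y ∈ lim←h satisfy Fi_h(x)|_{−M,M} = Fi_h(y)|_{−M,M} and neither Fi_h(x) nor Fi_h(y) contains the symbol *, then d(x, y) < ε. -/

import Mathlib

/-!
If `a`, `b` have equal, star-free itineraries of length `N + 1`, they lie on the same side of `c` at each of
the times `0, …, N`, so every point `z` between them satisfies `h^[n] z ∈ [[h^[n] a, h^[n] b]]` for
these `n` (`iterate_mem_uIcc`), and no `h^[n]` takes the value `c` on the interval they span. By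
compactness, local eventual ontoness is uniform: there is `N` such that every interval of length at
least `δ` is mapped onto `[0,1]` by some `h^[n]` with `n ≤ N`. Hence equal itineraries up to time `N`
force distance less than `δ` (`exists_itin_length`).

In the inverse limit, the forward itinerary of the coordinate `x i` is the full itinerary read from
index `-i` on (`fullItin_sub`), so agreement on a long central block makes the first `k` coordinates
close, and the remaining ones contribute little to the distance.
-/

open Set Filter

noncomputable section

/-- The unit interval `[0,1]` as a subtype of `ℝ`. -/
abbrev unitI : Type := Set.Icc (0 : ℝ) 1

/-- `f : [0,1] → [0,1]` is unimodal with critical point `c`: continuous, `c ∈ (0,1)`,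
strictly increasing on `[0,c]` and strictly decreasing on `[c,1]`. -/
def Unimodal (f : unitI → unitI) (c : unitI) : Prop :=
  Continuous f ∧ 0 < (c : ℝ) ∧ (c : ℝ) < 1 ∧
    StrictMonoOn f {x : unitI | x ≤ c} ∧ StrictAntiOn f {x : unitI | c ≤ x}

/-- `f` is locally eventually onto: for every `ε > 0` and every `x`, some iterate of `f`
maps the `ε`-ball about `x` (in `[0,1]`) onto all of `[0,1]`. -/
def LEO (f : unitI → unitI) : Prop :=
  ∀ ε : ℝ, 0 < ε → ∀ x : unitI, ∃ N : ℕ, f^[N] '' Metric.ball x ε = Set.univ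

/-- The omega-limit set of `c` under `f`: `⋂ₙ closure {fᵐ(c) : m ≥ n}`. -/
def omegaLimitSet (f : unitI → unitI) (c : unitI) : Set unitI :=
  ⋂ n : ℕ, closure {y : unitI | ∃ m : ℕ, n ≤ m ∧ f^[m] c = y}

/-- The inverse limit of `f`, as a subset of the product `ℕ → [0,1]`
(the subspace topology coincides with the topology induced by the usual metric). -/
def InvLim (f : unitI → unitI) : Set (ℕ → unitI) :=
  {x | ∀ i : ℕ, f (x (i + 1)) = x i}

/-- The set of inhomogeneities: points of the inverse limit all of whose
coordinates lie in the postcritical omega-limit set. -/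
def Inhom (f : unitI → unitI) (c : unitI) : Set (InvLim f) :=
  {x | ∀ n : ℕ, (x : ℕ → unitI) n ∈ omegaLimitSet f c}

/-- The itinerary symbol of `x` relative to the critical point `c`:
`some false` (i.e. `0`) if `x < c`, `some true` (i.e. `1`) if `x > c`,
and `none` (i.e. `*`) if `x = c`. -/
def itinSym (c x : unitI) : Option Bool :=
  if x < c then some false else if c < x then some true else none

/-- The itinerary of `x` under `h` (with critical point `c`). -/
def itin (h : unitI → unitI) (c : unitI) (x : unitI) : ℕ → Option Bool :=
  fun k => itinSym c (h^[k] x)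

/-- The set of precritical points: points whose itinerary contains the symbol `*`. -/
def precrit (h : unitI → unitI) (c : unitI) : Set unitI :=
  {x | ∃ k : ℕ, itin h c x k = none}

/-- The full itinerary of a point `x = (x₀, x₁, …)` of the inverse limit:
`Fi(-k) = i_h(x_k)` for `k ≥ 1` and `Fi(k) = i_h(hᵏ(x₀))` for `k ≥ 0`. -/
def fullItin (h : unitI → unitI) (c : unitI) (x : ℕ → unitI) : ℤ → Option Bool :=
  fun j => if j < 0 then itinSym c (x j.natAbs) else itinSym c (h^[j.toNat] (x 0))

/-- The metric on the inverse limit: `d(x,y) = Σᵢ |xᵢ - yᵢ| / 2^(i+1)`. -/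
def ilimDist (x y : ℕ → unitI) : ℝ :=
  ∑' i : ℕ, |((x i : ℝ) - (y i : ℝ))| / 2 ^ (i + 1)

/-- Membership in the segment between `u` and `v` is preserved by `h` when `u` and `v` lie strictly
on the same side of the critical point. -/
lemma Unimodal.map_mem_uIcc {h : unitI → unitI} {c u v w : unitI} (hh : Unimodal h c)
    (hs : itinSym c u = itinSym c v) (hu : itinSym c u ≠ none) (hw : w ∈ uIcc u v) :
    w ≠ c ∧ h w ∈ uIcc (h u) (h v) := by
  obtain ⟨-, -, -, hmono, hanti⟩ := hh
  have key : (u < c ∧ v < c) ∨ (c < u ∧ c < v) := by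
    unfold itinSym at hs hu
    grind
  rcases key with ⟨h1, h2⟩ | ⟨h1, h2⟩
  · have hwc : w < c := lt_of_le_of_lt (mem_uIcc.1 hw |>.elim (fun p => p.2.trans (le_max_right u v))
      (fun p => p.2.trans (le_max_left u v))) (max_lt h1 h2)
    refine ⟨hwc.ne, ?_⟩
    rw [mem_uIcc] at hw ⊢
    exact hw.imp
      (fun p => ⟨hmono.monotoneOn h1.le hwc.le p.1, hmono.monotoneOn hwc.le h2.le p.2⟩)
      (fun p => ⟨hmono.monotoneOn h2.le hwc.le p.1, hmono.monotoneOn hwc.le h1.le p.2⟩)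
  · have hwc : c < w := lt_of_lt_of_le (lt_min h1 h2) (mem_uIcc.1 hw |>.elim
      (fun p => (min_le_left u v).trans p.1) (fun p => (min_le_right u v).trans p.1))
    refine ⟨hwc.ne', ?_⟩
    rw [mem_uIcc] at hw ⊢
    exact hw.symm.imp
      (fun p => ⟨hanti.antitoneOn hwc.le h1.le p.2, hanti.antitoneOn h2.le hwc.le p.1⟩)
      (fun p => ⟨hanti.antitoneOn hwc.le h2.le p.2, hanti.antitoneOn h1.le hwc.le p.1⟩)

lemma iterate_mem_uIcc {h : unitI → unitI} {c a b z : unitI} (hh : Unimodal h c) {N : ℕ}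
    (hs : ∀ n ≤ N, itinSym c (h^[n] a) = itinSym c (h^[n] b))
    (ha : ∀ n ≤ N, itinSym c (h^[n] a) ≠ none) (hz : z ∈ uIcc a b) :
    ∀ n ≤ N, h^[n] z ∈ uIcc (h^[n] a) (h^[n] b) := by
  intro n
  induction n with
  | zero => intro _; simpa using hz
  | succ n ih =>
    intro hn
    have hle : n ≤ N := by omega
    simp only [Function.iterate_succ_apply']
    exact (hh.map_mem_uIcc (hs n hle) (ha n hle) (ih hle)).2

/-- Sufficiently long equal star-free itineraries force points of `[0,1]` to be `δ`-close. -/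
lemma exists_itin_length {h : unitI → unitI} {c : unitI} (hh : Unimodal h c) (hleo : LEO h)
    {δ : ℝ} (hδ : 0 < δ) :
    ∃ N : ℕ, ∀ a b : unitI, (∀ n ≤ N, itinSym c (h^[n] a) = itinSym c (h^[n] b)) →
      (∀ n ≤ N, itinSym c (h^[n] a) ≠ none) → |(a : ℝ) - b| < δ := by
  choose T hT using hleo (δ / 4) (by positivity)
  obtain ⟨t, ht⟩ := CompactSpace.elim_nhds_subcover (fun p : unitI => Metric.ball p (δ / 4))
    (fun p => Metric.ball_mem_nhds p (by positivity))
  refine ⟨t.sup T, fun a b hs ha => ?_⟩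
  by_contra! hab
  -- The ball of the cover that contains the midpoint of `a` and `b` lies between `a` and `b`.
  let m : unitI := ⟨((a : ℝ) + b) / 2, by
    have h1 := a.2.1; have h2 := b.2.1; have h3 := a.2.2; have h4 := b.2.2
    constructor <;> linarith⟩
  have hm : m ∈ ⋃ p ∈ t, Metric.ball p (δ / 4) := by rw [ht]; trivial
  simp only [mem_iUnion, exists_prop] at hm
  obtain ⟨p, hp, hmp⟩ := hm
  obtain ⟨z, hz, hzc⟩ : c ∈ h^[T p] '' Metric.ball p (δ / 4) := by rw [hT p]; trivial
  have hTp : T p ≤ t.sup T := Finset.le_sup hp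
  have hzab : z ∈ uIcc a b := by
    rw [Metric.mem_ball, Subtype.dist_eq, Real.dist_eq, abs_lt] at hmp hz
    have hmv : (m : ℝ) = ((a : ℝ) + b) / 2 := rfl
    rw [hmv] at hmp
    rw [mem_uIcc, ← Subtype.coe_le_coe, ← Subtype.coe_le_coe, ← Subtype.coe_le_coe,
      ← Subtype.coe_le_coe]
    rcases le_abs'.1 hab with h1 | h1
    · left; constructor <;> linarith
    · right; constructor <;> linarith
  exact (hh.map_mem_uIcc (hs _ hTp) (ha _ hTp) (iterate_mem_uIcc hh hs ha hzab _ hTp)).1 hzc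

lemma iterate_invLim {h : unitI → unitI} {x : ℕ → unitI} (hx : x ∈ InvLim h) (n i : ℕ) :
    h^[n] (x (i + n)) = x i := by
  induction n with
  | zero => rfl
  | succ n ih =>
    rw [Function.iterate_succ_apply, ← add_assoc, hx (i + n), ih]

/-- The forward itinerary of the coordinate `x i` is the full itinerary shifted by `i`. -/
lemma fullItin_sub {h : unitI → unitI} {c : unitI} {x : ℕ → unitI} (hx : x ∈ InvLim h)
    (n i : ℕ) : fullItin h c x ((n : ℤ) - i) = itinSym c (h^[n] (x i)) := by
  unfold fullItin
  rcases lt_or_ge n i with hni | hni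
  · obtain ⟨d, rfl⟩ := Nat.exists_eq_add_of_lt hni
    have h1 : ((n : ℤ) - ((n + d + 1 : ℕ) : ℤ)).natAbs = d + 1 := by omega
    rw [if_pos (by omega), h1, show n + d + 1 = (d + 1) + n by ring, iterate_invLim hx]
  · obtain ⟨d, rfl⟩ := Nat.exists_eq_add_of_le hni
    have h1 : (((i + d : ℕ) : ℤ) - (i : ℤ)).toNat = d := by omega
    have h2 := iterate_invLim hx i 0
    rw [zero_add] at h2
    rw [if_neg (by omega), h1, add_comm i d, Function.iterate_add_apply, h2]

/-- If the first `k` coordinates are `ε/8`-close, the distance in the inverse limit is less than `ε`.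
-/
lemma ilimDist_lt {x y : ℕ → unitI} {ε : ℝ} (hε : 0 < ε) {k : ℕ} (hk : (2 / 3 : ℝ) ^ k < ε / 8)
    (hxy : ∀ i < k, |(x i : ℝ) - y i| < ε / 8) : ilimDist x y < ε := by
  -- Comparing with a geometric series of ratio `3/4 = (1/2) / (2/3)` treats head and tail alike.
  have hbound : ∀ i, |(x i : ℝ) - y i| / 2 ^ (i + 1) ≤ ε / 8 * (3 / 4 : ℝ) ^ i := by
    intro i
    have hpow : (1 : ℝ) / 2 ^ (i + 1) ≤ (1 / 2 : ℝ) ^ i := by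
      rw [one_div_pow]
      gcongr <;> norm_num
    rcases lt_or_ge i k with hi | hi
    · calc |(x i : ℝ) - y i| / 2 ^ (i + 1) = |(x i : ℝ) - y i| * (1 / 2 ^ (i + 1)) := by ring
        _ ≤ ε / 8 * (1 / 2 : ℝ) ^ i :=
          mul_le_mul (hxy i hi).le hpow (by positivity) (by positivity)
        _ ≤ ε / 8 * (3 / 4 : ℝ) ^ i :=
          mul_le_mul_of_nonneg_left (pow_le_pow_left₀ (by norm_num) (by norm_num) i)
            (by positivity)
    · have h1 : |(x i : ℝ) - y i| ≤ 1 := by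
        have h1 := (x i).2.1; have h2 := (x i).2.2
        have h3 := (y i).2.1; have h4 := (y i).2.2
        rw [abs_le]; constructor <;> linarith
      have h2 : (2 / 3 : ℝ) ^ i ≤ ε / 8 :=
        (pow_le_pow_of_le_one (by norm_num) (by norm_num) hi).trans hk.le
      calc |(x i : ℝ) - y i| / 2 ^ (i + 1) ≤ 1 / 2 ^ (i + 1) := by gcongr
        _ ≤ (1 / 2 : ℝ) ^ i := hpow
        _ = (2 / 3 : ℝ) ^ i * (3 / 4 : ℝ) ^ i := by rw [← mul_pow]; norm_num
        _ ≤ ε / 8 * (3 / 4 : ℝ) ^ i := by gcongr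
  have hg : HasSum (fun i : ℕ => ε / 8 * (3 / 4 : ℝ) ^ i) (ε / 8 * (1 - 3 / 4)⁻¹) :=
    (hasSum_geometric_of_lt_one (by norm_num) (by norm_num)).mul_left _
  have hf : Summable fun i : ℕ => |(x i : ℝ) - y i| / 2 ^ (i + 1) :=
    Summable.of_nonneg_of_le (fun i => by positivity) hbound hg.summable
  have := hf.tsum_le_tsum hbound hg.summable
  rw [hg.tsum_eq] at this
  unfold ilimDist
  linarith

theorem stmt18 (h : unitI → unitI) (c : unitI) (hh : Unimodal h c) (hleo : LEO h)
    (ε : ℝ) (hε : 0 < ε) :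
    ∃ M : ℕ, 0 < M ∧ ∀ x y : ℕ → unitI, x ∈ InvLim h → y ∈ InvLim h →
      (∀ j : ℤ, -(M : ℤ) ≤ j → j ≤ (M : ℤ) → fullItin h c x j = fullItin h c y j) →
      (∀ j : ℤ, fullItin h c x j ≠ none) → (∀ j : ℤ, fullItin h c y j ≠ none) →
      ilimDist x y < ε := by
  obtain ⟨k, hk⟩ := exists_pow_lt_of_lt_one (show 0 < ε / 8 by positivity)
    (show (2 / 3 : ℝ) < 1 by norm_num)
  obtain ⟨N, hN⟩ := exists_itin_length hh hleo (show 0 < ε / 8 by positivity)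
  -- Times `0, …, N` for the coordinates `0, …, k - 1` correspond to indices in `[-k, N]`.
  refine ⟨N + k + 1, by omega, fun x y hx hy hxy hxs _ => ilimDist_lt hε hk fun i hi => ?_⟩
  refine hN _ _ (fun n hn => ?_) (fun n _ => ?_)
  · rw [← fullItin_sub hx, ← fullItin_sub hy]
    exact hxy _ (by push_cast; omega) (by push_cast; omega)
  · rw [← fullItin_sub hx]
    exact hxs _

end
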